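/- For a double-integrator robot with speed bound v_max > 0 and acceleration bound u_max > 0, starting from any configuration g = (p, v) ∈ ℝ² × ℝ² with ‖v‖ = v₀ satisfying 0 < v₀ ≤ v_max, the integral of the minimum travel time over the small-time reachable set satisfies liminf_{t→0⁺} (∫_{R_t(g)} τ_DI(g, q) dq) / t⁴ ≥ v₀ u_max / 12, where the integral is with respect to two-dimensional Lebesgue measure. -/

import Mathlib

open MeasureTheory Filter Topology Real

noncomputable section

/-- The plane `ℝ²` with the Euclidean norm. -/
abbrev Plane : Type := EuclideanSpace ℝ (Fin 2)

/-- A double-integrator (DI) trajectory with speed bound `vmax` and acceleration bound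
`umax`: a twice continuously differentiable curve in the plane whose velocity and
acceleration are bounded by `vmax` and `umax` respectively. -/
def IsDITraj (vmax umax : ℝ) (x : ℝ → Plane) : Prop :=
  ContDiff ℝ 2 x ∧ (∀ t, ‖deriv x t‖ ≤ vmax) ∧ (∀ t, ‖deriv (deriv x) t‖ ≤ umax)

/-- Minimum travel time of a DI robot from configuration `(p, v)` to the point `q`. -/
def tauDI (vmax umax : ℝ) (p v q : Plane) : ℝ :=
  sInf {T : ℝ | 0 ≤ T ∧ ∃ x : ℝ → Plane, IsDITraj vmax umax x ∧
    x 0 = p ∧ deriv x 0 = v ∧ x T = q}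

/-- Reachable set at time `t` of a DI robot starting at configuration `(p, v)`. -/
def reachDI (vmax umax : ℝ) (p v : Plane) (t : ℝ) : Set Plane :=
  {q | tauDI vmax umax p v q ≤ t}

/-!
Averaging two trajectories with the same initial configuration gives a third, so the set of points
reached at time exactly `T` is convex, and it contains the chord joining the ends of the two arcs
of circle traversed at full acceleration. As `T` runs over `[0, t]` these chords fill the region
`|y| ≤ u_max x² / (2 v₀²)` up to the advance of the arcs, about `v₀ t`. Conversely a trajectory
drifts from uniform motion by at most `u_max τ² / 2`, so points at distance `a` ahead have travel
time at least about `a / v₀`. On the rectangle `a ≤ x ≤ v₀ t`, `|y| ≤ u_max a² / (2 v₀²)`, this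
gives an integral of about `c³ (1 - c) v₀ u_max t⁴` for `a = c v₀ t`, and `c = 3 / 4` yields the
constant `27 / 256 > 1 / 12`.

The travel time is measurable because its sublevel sets are, up to the point `p`, unions of convex
sets with nonempty interior, which are Lebesgue measurable even when the union is uncountable.
-/

section ConvexUnion

open Set Metric Module

variable {E : Type*} [NormedAddCommGroup E] [NormedSpace ℝ E] [FiniteDimensional ℝ E]
  [MeasurableSpace E] [BorelSpace E] (μ : Measure E) [μ.IsAddHaarMeasure]

theorem antitoneOn_density_interior_of_convex {s : Set E} (hs : Convex ℝ s) {q : E}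
    (hq : q ∈ closure s) :
    AntitoneOn (fun r => μ (interior s ∩ closedBall q r) / μ (closedBall q r)) (Ioi 0) := by
  intro r hr R hR hrR
  rw [mem_Ioi] at hr hR
  have hratio : r / R ∈ Ioc (0 : ℝ) 1 := ⟨by positivity, (div_le_one hR).2 hrR⟩
  set c := ENNReal.ofReal ((r / R) ^ finrank ℝ E)
  have hc : c ≠ 0 := (ENNReal.ofReal_pos.2 (pow_pos hratio.1 _)).ne'
  have hhomothety : AffineMap.homothety q (r / R) '' (interior s ∩ closedBall q R) ⊆
      interior s ∩ closedBall q r := by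
    rintro _ ⟨y, ⟨hys, hyR⟩, rfl⟩
    refine ⟨?_, ?_⟩
    · rw [AffineMap.homothety_apply, vsub_eq_sub, vadd_eq_add, add_comm]
      exact hs.add_smul_sub_mem_interior' hq hys hratio
    · rw [mem_closedBall, dist_homothety_center, Real.norm_of_nonneg hratio.1.le]
      calc r / R * dist q y ≤ r / R * R := by
            gcongr
            exact mem_closedBall'.1 hyR
        _ = r := div_mul_cancel₀ r hR.ne'
  have hball : μ (closedBall q r) = c * μ (closedBall q R) := by
    rw [Measure.addHaar_closedBall_center μ q R, ← Measure.addHaar_closedBall_mul μ q hratio.1.le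
      hR.le, div_mul_cancel₀ r hR.ne']
  calc μ (interior s ∩ closedBall q R) / μ (closedBall q R)
      = c * μ (interior s ∩ closedBall q R) / (c * μ (closedBall q R)) :=
        (ENNReal.mul_div_mul_left _ _ hc ENNReal.ofReal_ne_top).symm
    _ = μ (AffineMap.homothety q (r / R) '' (interior s ∩ closedBall q R)) /
          μ (closedBall q r) := by
        rw [Measure.addHaar_image_homothety, abs_of_nonneg (pow_nonneg hratio.1.le _), hball]
    _ ≤ μ (interior s ∩ closedBall q r) / μ (closedBall q r) := by gcongr

/- The union `U` of the interiors is open, and at a point of some `A i` outside `U` its density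
cannot tend to `0`, so by the Lebesgue density theorem such points form a null set. -/
theorem nullMeasurableSet_iUnion_of_convex {ι : Type*} {A : ι → Set E}
    (hA : ∀ i, Convex ℝ (A i)) (hne : ∀ i, (interior (A i)).Nonempty) :
    NullMeasurableSet (⋃ i, A i) μ := by
  set U : Set E := ⋃ i, interior (A i)
  have hU : IsOpen U := isOpen_iUnion fun _ => isOpen_interior
  have hUA : U ⊆ ⋃ i, A i := iUnion_mono fun _ => interior_subset
  have hAU : (⋃ i, A i : Set E) ≤ᵐ[μ] U := by
    filter_upwards [Besicovitch.ae_tendsto_measure_inter_div_of_measurableSet μ hU.measurableSet]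
      with q hdensity (hqA : q ∈ ⋃ i, A i)
    by_contra (hqU : q ∉ U)
    rw [indicator_of_notMem hqU] at hdensity
    obtain ⟨i, hqi⟩ := mem_iUnion.1 hqA
    obtain ⟨c, hc⟩ := hne i
    have hR : 0 < dist c q + 1 := by positivity
    have hpos : 0 < μ (interior (A i) ∩ closedBall q (dist c q + 1)) :=
      Measure.measure_pos_of_mem_nhds μ <| inter_mem (isOpen_interior.mem_nhds hc) <|
        closedBall_mem_nhds_of_mem (mem_ball.2 (lt_add_one _))
    have hratio : 0 < μ (interior (A i) ∩ closedBall q (dist c q + 1)) /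
        μ (closedBall q (dist c q + 1)) :=
      ENNReal.div_pos hpos.ne' measure_closedBall_lt_top.ne
    refine hratio.not_ge (ge_of_tendsto hdensity ?_)
    filter_upwards [Ioc_mem_nhdsGT hR] with r hr
    calc _ ≤ μ (interior (A i) ∩ closedBall q r) / μ (closedBall q r) :=
          antitoneOn_density_interior_of_convex μ (hA i) (subset_closure hqi) hr.1 hR hr.2
      _ ≤ μ (U ∩ closedBall q r) / μ (closedBall q r) := by
          gcongr
          exact subset_iUnion (fun i => interior (A i)) i
  exact hU.measurableSet.nullMeasurableSet.congr (hUA.eventuallyLE.antisymm hAU)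

end ConvexUnion

section Frame

variable {ι E : Type*} [Fintype ι] [NormedAddCommGroup E] [InnerProductSpace ℝ E]

theorem exists_orthonormalBasis_norm_smul_eq [FiniteDimensional ℝ E]
    (hcard : Module.finrank ℝ E = Fintype.card ι) (i : ι) {v : E} (hv : v ≠ 0) :
    ∃ b : OrthonormalBasis ι ℝ E, ‖v‖ • b i = v := by
  have horth : Orthonormal ℝ (({i} : Set ι).domRestrict fun _ => ‖v‖⁻¹ • v) :=
    orthonormal_subsingleton_iff.2 fun _ => norm_smul_inv_norm (𝕜 := ℝ) hv
  obtain ⟨b, hb⟩ := horth.exists_orthonormalBasis_extension_of_card_eq hcard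
  exact ⟨b, by rw [hb i rfl, smul_inv_smul₀ (norm_ne_zero_iff.2 hv)]⟩

theorem norm_smul_add_smul_sq_of_inner_eq_zero {e f : E} (he : ‖e‖ = 1) (hf : ‖f‖ = 1)
    (hef : inner ℝ e f = 0) (x y : ℝ) : ‖x • e + y • f‖ ^ 2 = x ^ 2 + y ^ 2 := by
  rw [norm_add_sq_real, norm_smul, norm_smul, he, hf, inner_smul_left, inner_smul_right, hef]
  simp

theorem norm_smul_orthonormalBasis_apply (b : OrthonormalBasis ι ℝ E) (i : ι) {r : ℝ}
    (hr : 0 ≤ r) : ‖r • b i‖ = r := by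
  rw [norm_smul_of_nonneg hr, b.norm_eq_one, mul_one]

/-- The box, with sides parallel to the orthonormal frame `b` centred at `p`, of the points whose
`i`-th coordinate in that frame lies between `l i` and `u i`. -/
def coordBox (b : OrthonormalBasis ι ℝ E) (p : E) (l u : ι → ℝ) : Set E :=
  {q | ∀ i, b.repr (q - p) i ∈ Set.Icc (l i) (u i)}

variable (b : OrthonormalBasis ι ℝ E) (p : E) (l u : ι → ℝ)

theorem coordBox_eq_preimage :
    coordBox b p l u = (fun q => WithLp.ofLp (b.repr (q - p))) ⁻¹' Set.Icc l u := by
  ext q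
  simp only [coordBox, Set.mem_ofPred_eq, Set.mem_preimage, Set.mem_Icc, Pi.le_def, forall_and]

variable [FiniteDimensional ℝ E] [MeasurableSpace E] [BorelSpace E]

theorem measurePreserving_ofLp_repr_sub :
    MeasurePreserving fun q => WithLp.ofLp (b.repr (q - p)) :=
  (PiLp.volume_preserving_ofLp ι).comp
    (b.measurePreserving_repr.comp (measurePreserving_sub_right volume p))

theorem measurableSet_coordBox : MeasurableSet (coordBox b p l u) := by
  rw [coordBox_eq_preimage]
  exact (measurePreserving_ofLp_repr_sub b p).measurable measurableSet_Icc

theorem volume_coordBox : volume (coordBox b p l u) = ∏ i, ENNReal.ofReal (u i - l i) := by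
  rw [coordBox_eq_preimage, (measurePreserving_ofLp_repr_sub b p).measure_preimage
    measurableSet_Icc.nullMeasurableSet, Real.volume_Icc_pi]

theorem volume_coordBox_ne_top : volume (coordBox b p l u) ≠ ⊤ := by
  rw [volume_coordBox]
  exact ENNReal.prod_ne_top fun _ _ => ENNReal.ofReal_ne_top

theorem volume_real_coordBox {l u : ι → ℝ} (hlu : l ≤ u) :
    volume.real (coordBox b p l u) = ∏ i, (u i - l i) := by
  rw [Measure.real, volume_coordBox, ENNReal.toReal_prod]
  exact Finset.prod_congr rfl fun i _ => ENNReal.toReal_ofReal (sub_nonneg.2 (hlu i))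

end Frame

theorem norm_sub_sub_smul_le_of_norm_accel_le {E : Type*} [NormedAddCommGroup E]
    [NormedSpace ℝ E] {x x' x'' : ℝ → E} {u T : ℝ} (hx : ∀ s, HasDerivAt x (x' s) s)
    (hx' : ∀ s, HasDerivAt x' (x'' s) s) (hu : ∀ s, ‖x'' s‖ ≤ u) (hT : 0 ≤ T) :
    ‖x T - x 0 - T • x' 0‖ ≤ u * T ^ 2 / 2 := by
  have hvel : ∀ s ∈ Set.Icc 0 T, ‖x' s - x' 0‖ ≤ u * (s - 0) :=
    norm_image_sub_le_of_norm_deriv_le_segment' (fun s _ => (hx' s).hasDerivWithinAt)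
      fun s _ => hu s
  have hdrift (s : ℝ) : HasDerivAt (fun s => x s - x 0 - s • x' 0) (x' s - x' 0) s := by
    simpa using! ((hx s).sub_const (x 0)).sub ((hasDerivAt_id s).smul_const (x' 0))
  have hbound (s : ℝ) : HasDerivAt (fun s => u * s ^ 2 / 2) (u * (s - 0)) s := by
    convert! ((hasDerivAt_pow 2 s).const_mul u).div_const 2 using 1
    push_cast
    ring
  exact image_norm_le_of_norm_deriv_right_le_deriv_boundary
    (fun s _ => (hdrift s).continuousAt.continuousWithinAt)
    (fun s _ => (hdrift s).hasDerivWithinAt) (by simp) hbound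
    (fun s hs => hvel s (Set.Ico_subset_Icc_self hs)) (Set.right_mem_Icc.2 hT)

/-- The set of end points at time exactly `T` of the double-integrator trajectories starting at
configuration `(p, v)`. -/
def exactReachDI (vmax umax : ℝ) (p v : Plane) (T : ℝ) : Set Plane :=
  {q | ∃ x : ℝ → Plane, IsDITraj vmax umax x ∧ x 0 = p ∧ deriv x 0 = v ∧ x T = q}

section Trajectories

variable {vmax umax v₀ T t : ℝ} {p v q : Plane}

theorem mem_exactReachDI_iff_exists_hasDerivAt :
    q ∈ exactReachDI vmax umax p v T ↔ ∃ x x' x'' : ℝ → Plane,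
      (∀ s, HasDerivAt x (x' s) s) ∧ (∀ s, HasDerivAt x' (x'' s) s) ∧ Continuous x'' ∧
      (∀ s, ‖x' s‖ ≤ vmax) ∧ (∀ s, ‖x'' s‖ ≤ umax) ∧ x 0 = p ∧ x' 0 = v ∧ x T = q := by
  constructor
  · rintro ⟨x, ⟨hx, hspeed, haccel⟩, hx0, hv0, hxT⟩
    have hx' : ContDiff ℝ 1 (deriv x) := hx.deriv'
    exact ⟨x, deriv x, deriv (deriv x), fun s => (hx.differentiable two_ne_zero s).hasDerivAt,
      fun s => (hx.differentiable_deriv_two s).hasDerivAt, hx'.continuous_deriv_one, hspeed,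
      haccel, hx0, hv0, hxT⟩
  · rintro ⟨x, x', x'', hx, hx', hcont, hspeed, haccel, hx0, hv0, hxT⟩
    obtain rfl : deriv x = x' := funext fun s => (hx s).deriv
    obtain rfl : deriv (deriv x) = x'' := funext fun s => (hx' s).deriv
    have hx'C1 : ContDiff ℝ 1 (deriv x) :=
      contDiff_one_iff_deriv.2 ⟨fun s => (hx' s).differentiableAt, hcont⟩
    have hxC2 : ContDiff ℝ 2 x := contDiff_succ_iff_deriv.2
      ⟨fun s => (hx s).differentiableAt, by simp, hx'C1⟩
    exact ⟨x, ⟨hxC2, hspeed, haccel⟩, hx0, hv0, hxT⟩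

theorem convex_exactReachDI (vmax umax : ℝ) (p v : Plane) (T : ℝ) :
    Convex ℝ (exactReachDI vmax umax p v T) := by
  intro q hq r hr a b ha hb hab
  obtain ⟨x, x', x'', hx, hx', hx'', hxv, hxu, rfl, rfl, rfl⟩ :=
    mem_exactReachDI_iff_exists_hasDerivAt.1 hq
  obtain ⟨y, y', y'', hy, hy', hy'', hyv, hyu, hy0, hy'0, rfl⟩ :=
    mem_exactReachDI_iff_exists_hasDerivAt.1 hr
  have hnorm {m : ℝ} {z w : Plane} (hz : ‖z‖ ≤ m) (hw : ‖w‖ ≤ m) : ‖a • z + b • w‖ ≤ m :=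
    mem_closedBall_zero_iff.1 <| convex_closedBall (0 : Plane) m
      (mem_closedBall_zero_iff.2 hz) (mem_closedBall_zero_iff.2 hw) ha hb hab
  refine mem_exactReachDI_iff_exists_hasDerivAt.2
    ⟨fun s => a • x s + b • y s, fun s => a • x' s + b • y' s, fun s => a • x'' s + b • y'' s,
    fun s => ((hx s).const_smul a).add ((hy s).const_smul b),
    fun s => ((hx' s).const_smul a).add ((hy' s).const_smul b), by fun_prop,
    fun s => hnorm (hxv s) (hyv s), fun s => hnorm (hxu s) (hyu s), ?_, ?_, rfl⟩
  · simp only [hy0, ← add_smul, hab, one_smul]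
  · simp only [hy'0, ← add_smul, hab, one_smul]

theorem norm_sub_sub_smul_le_of_mem_exactReachDI (hT : 0 ≤ T)
    (hq : q ∈ exactReachDI vmax umax p v T) : ‖q - p - T • v‖ ≤ umax * T ^ 2 / 2 := by
  obtain ⟨x, x', x'', hx, hx', -, -, haccel, rfl, rfl, rfl⟩ :=
    mem_exactReachDI_iff_exists_hasDerivAt.1 hq
  exact norm_sub_sub_smul_le_of_norm_accel_le hx hx' haccel hT

section Loop

variable {k : ℝ}

/- The velocity is `cos (k s) v + sin² (k s) w / 2`: the contribution of `v` averages out, and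
`|cos θ| + sin² θ / 2 ≤ 1` keeps the speed below `vmax`. -/
theorem loop_mem_exactReachDI {w : Plane} (hk : 0 < k) (hku : 2 * (k * vmax) ≤ umax)
    (hv : ‖v‖ ≤ vmax) (hw : ‖w‖ ≤ vmax) (p : Plane) (T : ℝ) :
    p + ((sin (k * T) / k) • v + ((T - sin (k * T) * cos (k * T) / k) / 4) • w) ∈
      exactReachDI vmax umax p v T := by
  have hvmax : 0 ≤ vmax := (norm_nonneg v).trans hv
  have hlin (s : ℝ) : HasDerivAt (fun s => k * s) k s := by
    simpa using (hasDerivAt_id s).const_mul k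
  have hnorm (a c : ℝ) : ‖a • v + c • w‖ ≤ (|a| + |c|) * vmax := by
    calc ‖a • v + c • w‖ ≤ |a| * ‖v‖ + |c| * ‖w‖ := by
          simpa only [norm_smul, Real.norm_eq_abs] using norm_add_le (a • v) (c • w)
      _ ≤ |a| * vmax + |c| * vmax := by gcongr
      _ = (|a| + |c|) * vmax := by ring
  refine mem_exactReachDI_iff_exists_hasDerivAt.2
    ⟨fun s => p + ((sin (k * s) / k) • v + ((s - sin (k * s) * cos (k * s) / k) / 4) • w),
    fun s => cos (k * s) • v + (sin (k * s) ^ 2 / 2) • w,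
    fun s => (-(k * sin (k * s))) • v + (k * (sin (k * s) * cos (k * s))) • w,
    fun s => ?_, fun s => ?_, by fun_prop, fun s => ?_, fun s => ?_, by simp, by simp, rfl⟩
  · convert! (((((hlin s).sin.div_const k).smul_const v).add
      ((((hasDerivAt_id s).sub (((hlin s).sin.mul (hlin s).cos).div_const k)).div_const
        4).smul_const w)).const_add p) using 3
    · field_simp
    · field_simp
      linear_combination 2 * sin_sq_add_cos_sq (k * s)
  · convert! ((hlin s).cos.smul_const v).add ((((hlin s).sin.pow 2).div_const 2).smul_const w)
      using 3
    · ring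
    · push_cast
      ring
  · have hcoef : |cos (k * s)| + |sin (k * s) ^ 2 / 2| ≤ 1 := by
      rw [abs_of_nonneg (by positivity : 0 ≤ sin (k * s) ^ 2 / 2), sin_sq, ← sq_abs (cos (k * s))]
      linarith [sq_nonneg (1 - |cos (k * s)|)]
    exact (hnorm _ _).trans (mul_le_of_le_one_left hvmax hcoef)
  · have hcoef : |-(k * sin (k * s))| + |k * (sin (k * s) * cos (k * s))| ≤ 2 * k := by
      have hsin := abs_sin_le_one (k * s)
      have hsincos : |sin (k * s)| * |cos (k * s)| ≤ 1 :=
        mul_le_one₀ hsin (abs_nonneg _) (abs_cos_le_one _)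
      rw [abs_neg, abs_mul, abs_mul, abs_mul, abs_of_pos hk, ← mul_add, mul_comm 2]
      gcongr
      linarith
    calc _ ≤ 2 * k * vmax := (hnorm _ _).trans (by gcongr)
      _ ≤ umax := by linarith

theorem closedBall_subset_exactReachDI (hk : 0 < k) (hku : 2 * (k * vmax) ≤ umax)
    (hv : ‖v‖ ≤ vmax) (hT : sin (k * T) * cos (k * T) / k < T) :
    Metric.closedBall (p + (sin (k * T) / k) • v) ((T - sin (k * T) * cos (k * T) / k) / 4 * vmax)
      ⊆ exactReachDI vmax umax p v T := by
  intro q hq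
  set r := (T - sin (k * T) * cos (k * T) / k) / 4 with hr
  have hr0 : 0 < r := by rw [hr]; linarith
  have hw : ‖r⁻¹ • (q - (p + (sin (k * T) / k) • v))‖ ≤ vmax := by
    rw [norm_smul, Real.norm_of_nonneg (by positivity), inv_mul_le_iff₀ hr0]
    exact mem_closedBall_iff_norm.1 hq
  have hmem := loop_mem_exactReachDI hk hku hv hw p T
  rwa [← hr, smul_inv_smul₀ hr0.ne', ← add_assoc, add_sub_cancel] at hmem

theorem sin_mul_cos_div_lt (hk : 0 < k) (hT : 0 < T) : sin (k * T) * cos (k * T) / k < T := by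
  have hlt : sin (2 * (k * T)) < 2 * (k * T) := sin_lt (by positivity)
  rw [sin_two_mul] at hlt
  rw [div_lt_iff₀ hk]
  linarith

end Loop

theorem interior_exactReachDI_nonempty (hvmax : 0 < vmax) (humax : 0 < umax) (hv : ‖v‖ ≤ vmax)
    (hT : 0 < T) : (interior (exactReachDI vmax umax p v T)).Nonempty := by
  have hk : 0 < umax / (2 * vmax) := by positivity
  have hku : 2 * (umax / (2 * vmax) * vmax) ≤ umax := le_of_eq (by field_simp)
  have hlt := sin_mul_cos_div_lt hk hT
  have hradius := mul_pos (div_pos (sub_pos.2 hlt) four_pos) hvmax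
  exact ⟨_, interior_mono (closedBall_subset_exactReachDI hk hku hv hlt)
    (Metric.ball_subset_interior_closedBall (Metric.mem_ball_self hradius))⟩

theorem exists_mem_exactReachDI (hvmax : 0 < vmax) (humax : 0 < umax) (hv : ‖v‖ ≤ vmax)
    (p q : Plane) : ∃ T, 0 ≤ T ∧ q ∈ exactReachDI vmax umax p v T := by
  set k := umax / (2 * vmax) with hkdef
  have hk : 0 < k := by positivity
  have hku : 2 * (k * vmax) ≤ umax := le_of_eq (by rw [hkdef]; field_simp)
  set T := 4 * ‖q - p‖ / vmax + 5 / k with hT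
  have hT0 : 0 < T := by positivity
  refine ⟨T, hT0.le, closedBall_subset_exactReachDI hk hku hv (sin_mul_cos_div_lt hk hT0) ?_⟩
  have hsin : |sin (k * T)| ≤ 1 := abs_sin_le_one _
  have hsincos : sin (k * T) * cos (k * T) ≤ 1 := by
    linarith [two_mul_le_add_sq (sin (k * T)) (cos (k * T)), sin_sq_add_cos_sq (k * T)]
  rw [mem_closedBall_iff_norm]
  calc ‖q - (p + (sin (k * T) / k) • v)‖
      ≤ ‖q - p‖ + |sin (k * T)| / k * ‖v‖ := by
        simpa only [sub_sub, norm_smul, norm_div, Real.norm_eq_abs, abs_of_pos hk] using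
          norm_sub_le (q - p) ((sin (k * T) / k) • v)
    _ ≤ ‖q - p‖ + 1 / k * vmax := by gcongr
    _ = (T - 1 / k) / 4 * vmax := by rw [hT]; field_simp; ring
    _ ≤ (T - sin (k * T) * cos (k * T) / k) / 4 * vmax := by gcongr

theorem tauDI_nonneg (vmax umax : ℝ) (p v q : Plane) : 0 ≤ tauDI vmax umax p v q :=
  Real.sInf_nonneg fun _ hT => hT.1

theorem tauDI_le_of_mem_exactReachDI (hT : 0 ≤ T) (hq : q ∈ exactReachDI vmax umax p v T) :
    tauDI vmax umax p v q ≤ T :=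
  csInf_le ⟨0, fun _ hT => hT.1⟩ ⟨hT, hq⟩

section Reachable

variable (hvmax : 0 < vmax) (humax : 0 < umax) (hv : ‖v‖ ≤ vmax)
include hvmax humax hv

theorem tauDI_lt_iff_exists_mem_exactReachDI :
    tauDI vmax umax p v q < t ↔ ∃ T, 0 ≤ T ∧ T < t ∧ q ∈ exactReachDI vmax umax p v T :=
  (csInf_lt_iff ⟨0, fun _ hT => hT.1⟩ (exists_mem_exactReachDI hvmax humax hv p q)).trans <|
    exists_congr fun _ => and_assoc.trans (and_congr_right fun _ => and_comm)

theorem norm_sub_sub_tauDI_smul_le :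
    ‖q - p - tauDI vmax umax p v q • v‖ ≤ umax * tauDI vmax umax p v q ^ 2 / 2 := by
  have hclosed : IsClosed {T : ℝ | ‖q - p - T • v‖ ≤ umax * T ^ 2 / 2} :=
    isClosed_le (by fun_prop) (by fun_prop)
  have hsub : {T : ℝ | 0 ≤ T ∧ q ∈ exactReachDI vmax umax p v T} ⊆
      {T : ℝ | ‖q - p - T • v‖ ≤ umax * T ^ 2 / 2} :=
    fun T hT => norm_sub_sub_smul_le_of_mem_exactReachDI hT.1 hT.2
  exact closure_minimal hsub hclosed
    (csInf_mem_closure (exists_mem_exactReachDI hvmax humax hv p q) ⟨0, fun _ hT => hT.1⟩)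

theorem abs_repr_sub_tauDI_mul_le {ι : Type*} [Fintype ι] (b : OrthonormalBasis ι ℝ Plane)
    (p q : Plane) (i : ι) :
    |b.repr (q - p) i - tauDI vmax umax p v q * b.repr v i| ≤
      umax * tauDI vmax umax p v q ^ 2 / 2 := by
  calc |b.repr (q - p) i - tauDI vmax umax p v q * b.repr v i|
      = ‖b.repr (q - p - tauDI vmax umax p v q • v) i‖ := by
        rw [map_sub b.repr (q - p), map_smul, PiLp.sub_apply, PiLp.smul_apply,
          smul_eq_mul, Real.norm_eq_abs]
    _ ≤ ‖b.repr (q - p - tauDI vmax umax p v q • v)‖ := PiLp.norm_apply_le _ i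
    _ = ‖q - p - tauDI vmax umax p v q • v‖ := b.repr.norm_map _
    _ ≤ umax * tauDI vmax umax p v q ^ 2 / 2 := norm_sub_sub_tauDI_smul_le hvmax humax hv

theorem nullMeasurableSet_tauDI_lt (t : ℝ) :
    NullMeasurableSet {q | tauDI vmax umax p v q < t} volume := by
  refine (nullMeasurableSet_iUnion_of_convex volume
    (A := fun T : Set.Ioo 0 t => exactReachDI vmax umax p v T)
    (fun T => convex_exactReachDI vmax umax p v T)
    (fun T => interior_exactReachDI_nonempty hvmax humax hv T.2.1)).congr ?_
  filter_upwards [Measure.ae_ne volume p] with q hqp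
  refine propext (Set.mem_iUnion.trans <| Iff.trans ?_
    (tauDI_lt_iff_exists_mem_exactReachDI hvmax humax hv).symm)
  constructor
  · rintro ⟨⟨T, hT0, hTt⟩, hq⟩
    exact ⟨T, hT0.le, hTt, hq⟩
  · rintro ⟨T, hT0, hTt, hq⟩
    obtain rfl | hT0 := hT0.eq_or_lt
    · obtain ⟨x, -, hx0, -, hxq⟩ := hq
      exact absurd (hxq.symm.trans hx0) hqp
    · exact ⟨⟨T, hT0, hTt⟩, hq⟩

theorem aemeasurable_tauDI : AEMeasurable (tauDI vmax umax p v) volume :=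
  NullMeasurable.aemeasurable <|
    measurable_of_Iio (δ := NullMeasurableSpace Plane volume)
      (nullMeasurableSet_tauDI_lt hvmax humax hv)

end Reachable

section Arc

variable {ω : ℝ} (b : OrthonormalBasis (Fin 2) ℝ Plane)

/-- Forward displacement at time `t` of uniform circular motion with speed `v₀` and turning rate
`ω`. -/
def arcAdvance (v₀ ω t : ℝ) : ℝ := v₀ / ω * sin (ω * t)

/-- Lateral displacement at time `t` of uniform circular motion with speed `v₀` and turning rate
`ω`. -/
def arcOffset (v₀ ω t : ℝ) : ℝ := v₀ / ω * (1 - cos (ω * t))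

theorem arcAdvance_neg (v₀ ω t : ℝ) : arcAdvance v₀ (-ω) t = arcAdvance v₀ ω t := by
  rw [arcAdvance, neg_mul, sin_neg, div_neg, neg_mul_neg, arcAdvance]

theorem arcOffset_neg (v₀ ω t : ℝ) : arcOffset v₀ (-ω) t = -arcOffset v₀ ω t := by
  rw [arcOffset, neg_mul, cos_neg, div_neg, neg_mul, arcOffset]

theorem hasDerivAt_arcAdvance (hω : ω ≠ 0) (v₀ s : ℝ) :
    HasDerivAt (arcAdvance v₀ ω) (v₀ * cos (ω * s)) s := by
  convert! (((hasDerivAt_id s).const_mul ω).sin.const_mul (v₀ / ω)) using 1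
  simp only [id]
  field_simp

theorem hasDerivAt_arcOffset (hω : ω ≠ 0) (v₀ s : ℝ) :
    HasDerivAt (arcOffset v₀ ω) (v₀ * sin (ω * s)) s := by
  convert! ((((hasDerivAt_id s).const_mul ω).cos.const_sub 1).const_mul (v₀ / ω)) using 1
  simp only [id]
  field_simp

theorem arc_mem_exactReachDI (hω : ω ≠ 0) (hspeed : |v₀| ≤ vmax) (haccel : |v₀ * ω| ≤ umax)
    (p : Plane) (T : ℝ) :
    p + (arcAdvance v₀ ω T • b 0 + arcOffset v₀ ω T • b 1) ∈
      exactReachDI vmax umax p (v₀ • b 0) T := by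
  have hnorm {x y r m : ℝ} (hxy : x ^ 2 + y ^ 2 = r ^ 2) (hr : |r| ≤ m) :
      ‖x • b 0 + y • b 1‖ ≤ m := by
    rw [← norm_smul_add_smul_sq_of_inner_eq_zero (b.norm_eq_one 0) (b.norm_eq_one 1)
      (b.inner_eq_zero zero_ne_one), sq_eq_sq_iff_abs_eq_abs, abs_norm] at hxy
    exact hxy.trans_le hr
  have hlin (s : ℝ) : HasDerivAt (fun s => ω * s) ω s := by
    simpa using (hasDerivAt_id s).const_mul ω
  refine mem_exactReachDI_iff_exists_hasDerivAt.2
    ⟨fun s => p + (arcAdvance v₀ ω s • b 0 + arcOffset v₀ ω s • b 1),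
    fun s => (v₀ * cos (ω * s)) • b 0 + (v₀ * sin (ω * s)) • b 1,
    fun s => (v₀ * (-sin (ω * s) * ω)) • b 0 + (v₀ * (cos (ω * s) * ω)) • b 1,
    fun s => (((hasDerivAt_arcAdvance hω v₀ s).smul_const (b 0)).add
      ((hasDerivAt_arcOffset hω v₀ s).smul_const (b 1))).const_add p,
    fun s => (((hlin s).cos.const_mul v₀).smul_const (b 0)).add
      (((hlin s).sin.const_mul v₀).smul_const (b 1)),
    by fun_prop, fun s => hnorm ?_ hspeed, fun s => hnorm ?_ haccel, ?_, by simp, rfl⟩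
  · linear_combination v₀ ^ 2 * sin_sq_add_cos_sq (ω * s)
  · linear_combination (v₀ * ω) ^ 2 * sin_sq_add_cos_sq (ω * s)
  · simp [arcAdvance, arcOffset]

theorem chord_mem_exactReachDI (hω : ω ≠ 0) (hspeed : |v₀| ≤ vmax) (haccel : |v₀ * ω| ≤ umax)
    (p : Plane) {y : ℝ} (hy : |y| ≤ arcOffset v₀ ω T) :
    p + (arcAdvance v₀ ω T • b 0 + y • b 1) ∈ exactReachDI vmax umax p (v₀ • b 0) T := by
  have hleft := arc_mem_exactReachDI b hω hspeed haccel p T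
  have hright := arc_mem_exactReachDI b (neg_ne_zero.2 hω) hspeed
    ((by rw [mul_neg, abs_neg] : |v₀ * -ω| = |v₀ * ω|).trans_le haccel) p T
  rw [arcAdvance_neg, arcOffset_neg] at hright
  have hchord : Convex ℝ {y : ℝ | p + (arcAdvance v₀ ω T • b 0 + y • b 1) ∈
      exactReachDI vmax umax p (v₀ • b 0) T} := by
    convert! (convex_exactReachDI vmax umax p (v₀ • b 0) T).affine_preimage
      (AffineMap.lineMap (p + arcAdvance v₀ ω T • b 0)
        (p + arcAdvance v₀ ω T • b 0 + b 1)) using 1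
    ext y
    simp [AffineMap.lineMap_apply, add_comm, add_left_comm]
  exact hchord.ordConnected.out hright hleft (abs_le.1 hy)

theorem sq_arcAdvance_le (hω : 0 < ω) (hv₀ : 0 < v₀) (T : ℝ) :
    ω * arcAdvance v₀ ω T ^ 2 / (2 * v₀) ≤ arcOffset v₀ ω T := by
  have hsin : sin (ω * T) ^ 2 ≤ 2 * (1 - cos (ω * T)) := by
    rw [sin_sq]
    linarith [sq_nonneg (1 - cos (ω * T))]
  calc ω * arcAdvance v₀ ω T ^ 2 / (2 * v₀) = v₀ / ω * (sin (ω * T) ^ 2 / 2) := by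
        rw [arcAdvance]; field_simp
    _ ≤ arcOffset v₀ ω T := by
        rw [arcOffset]
        gcongr
        linarith

theorem tauDI_le_of_mem_Icc_arcAdvance (humax : 0 < umax) (hv₀ : 0 < v₀) (hle : v₀ ≤ vmax)
    (ht : 0 ≤ t) {x y : ℝ} (hx : x ∈ Set.Icc 0 (arcAdvance v₀ (umax / v₀) t))
    (hy : |y| ≤ umax * x ^ 2 / (2 * v₀ ^ 2)) :
    tauDI vmax umax p (v₀ • b 0) (p + (x • b 0 + y • b 1)) ≤ t := by
  have hω : 0 < umax / v₀ := by positivity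
  have hcont : ContinuousOn (arcAdvance v₀ (umax / v₀)) (Set.Icc 0 t) := fun s _ =>
    (hasDerivAt_arcAdvance hω.ne' v₀ s).continuousAt.continuousWithinAt
  obtain ⟨T, hT, rfl⟩ : ∃ T ∈ Set.Icc 0 t, arcAdvance v₀ (umax / v₀) T = x := by
    refine intermediate_value_Icc ht hcont ?_
    rwa [arcAdvance, mul_zero, sin_zero, mul_zero]
  refine (tauDI_le_of_mem_exactReachDI hT.1 (chord_mem_exactReachDI b hω.ne'
    (by rwa [abs_of_pos hv₀]) ?_ p (hy.trans ?_))).trans hT.2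
  · rw [mul_div_cancel₀ _ hv₀.ne', abs_of_pos humax]
  · refine le_of_eq_of_le ?_ (sq_arcAdvance_le hω hv₀ T)
    field_simp

end Arc

section SmallTime

variable (b : OrthonormalBasis (Fin 2) ℝ Plane) (humax : 0 < umax) (hv₀ : 0 < v₀) (hle : v₀ ≤ vmax)
include humax hv₀ hle

theorem abs_repr_zero_sub_tauDI_mul_le (p q : Plane) :
    |b.repr (q - p) 0 - tauDI vmax umax p (v₀ • b 0) q * v₀| ≤
      umax * tauDI vmax umax p (v₀ • b 0) q ^ 2 / 2 := by
  have hv : ‖v₀ • b 0‖ ≤ vmax := (norm_smul_orthonormalBasis_apply b 0 hv₀.le).trans_le hle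
  simpa using abs_repr_sub_tauDI_mul_le (hv₀.trans_le hle) humax hv b p q 0

theorem abs_repr_one_le (p q : Plane) :
    |b.repr (q - p) 1| ≤ umax * tauDI vmax umax p (v₀ • b 0) q ^ 2 / 2 := by
  have hv : ‖v₀ • b 0‖ ≤ vmax := (norm_smul_orthonormalBasis_apply b 0 hv₀.le).trans_le hle
  simpa using abs_repr_sub_tauDI_mul_le (hv₀.trans_le hle) humax hv b p q 1

theorem reachDI_subset_coordBox (p : Plane) (t : ℝ) :
    reachDI vmax umax p (v₀ • b 0) t ⊆ coordBox b p
      ![-(umax * t ^ 2 / 2), -(umax * t ^ 2 / 2)]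
      ![v₀ * t + umax * t ^ 2 / 2, umax * t ^ 2 / 2] := by
  intro q (hq : tauDI vmax umax p (v₀ • b 0) q ≤ t)
  have hτ := tauDI_nonneg vmax umax p (v₀ • b 0) q
  have hsq : umax * tauDI vmax umax p (v₀ • b 0) q ^ 2 / 2 ≤ umax * t ^ 2 / 2 := by gcongr
  have hdrift : v₀ * tauDI vmax umax p (v₀ • b 0) q ≤ v₀ * t := by gcongr
  have hdrift0 : 0 ≤ v₀ * tauDI vmax umax p (v₀ • b 0) q := by positivity
  have h0 := abs_le.1 (abs_repr_zero_sub_tauDI_mul_le b humax hv₀ hle p q)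
  have h1 := abs_le.1 (abs_repr_one_le b humax hv₀ hle p q)
  refine Fin.forall_fin_two.2 ⟨⟨?_, ?_⟩, ?_, ?_⟩ <;>
    simp only [Matrix.cons_val_zero, Matrix.cons_val_one] <;> linarith

theorem volume_reachDI_ne_top (p : Plane) (t : ℝ) :
    volume (reachDI vmax umax p (v₀ • b 0) t) ≠ ⊤ :=
  measure_ne_top_of_subset (reachDI_subset_coordBox b humax hv₀ hle p t)
    (volume_coordBox_ne_top b p _ _)

theorem integrableOn_tauDI_reachDI (p : Plane) (t : ℝ) :
    IntegrableOn (tauDI vmax umax p (v₀ • b 0)) (reachDI vmax umax p (v₀ • b 0) t) := by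
  have hv : ‖v₀ • b 0‖ ≤ vmax := (norm_smul_orthonormalBasis_apply b 0 hv₀.le).trans_le hle
  have hmeas : AEMeasurable (tauDI vmax umax p (v₀ • b 0)) :=
    aemeasurable_tauDI (hv₀.trans_le hle) humax hv
  have hreach : NullMeasurableSet (reachDI vmax umax p (v₀ • b 0) t) :=
    nullMeasurableSet_le hmeas aemeasurable_const
  refine Measure.integrableOn_of_bounded (M := t) (volume_reachDI_ne_top b humax hv₀ hle p t)
    hmeas.aestronglyMeasurable ?_
  filter_upwards [ae_restrict_mem₀ hreach] with q hq
  rwa [Real.norm_of_nonneg (tauDI_nonneg _ _ _ _ _)]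

theorem integral_tauDI_reachDI_le (p : Plane) (ht : 0 ≤ t) :
    ∫ q in reachDI vmax umax p (v₀ • b 0) t, tauDI vmax umax p (v₀ • b 0) q ≤
      t * ((v₀ * t + umax * t ^ 2) * (umax * t ^ 2)) := by
  have hcorner : ![-(umax * t ^ 2 / 2), -(umax * t ^ 2 / 2)] ≤
      ![v₀ * t + umax * t ^ 2 / 2, umax * t ^ 2 / 2] := by
    have hoffset : 0 ≤ umax * t ^ 2 / 2 := by positivity
    have hadvance : umax * t ^ 2 / 2 ≤ v₀ * t + umax * t ^ 2 / 2 :=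
      le_add_of_nonneg_left (by positivity)
    exact Pi.le_def.2 <| Fin.forall_fin_two.2
      ⟨(neg_le_self hoffset).trans hadvance, neg_le_self hoffset⟩
  calc ∫ q in reachDI vmax umax p (v₀ • b 0) t, tauDI vmax umax p (v₀ • b 0) q
      ≤ t * volume.real (reachDI vmax umax p (v₀ • b 0) t) :=
        (le_abs_self _).trans <| norm_setIntegral_le_of_norm_le_const (C := t)
          (volume_reachDI_ne_top b humax hv₀ hle p t).lt_top fun q hq => by
            rwa [Real.norm_of_nonneg (tauDI_nonneg _ _ _ _ _)]
    _ ≤ t * volume.real (coordBox b p ![-(umax * t ^ 2 / 2), -(umax * t ^ 2 / 2)]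
          ![v₀ * t + umax * t ^ 2 / 2, umax * t ^ 2 / 2]) := by
        gcongr
        · exact volume_coordBox_ne_top b p _ _
        · exact reachDI_subset_coordBox b humax hv₀ hle p t
    _ = t * ((v₀ * t + umax * t ^ 2) * (umax * t ^ 2)) := by
        rw [volume_real_coordBox b p hcorner, Fin.prod_univ_two]
        simp only [Matrix.cons_val_zero, Matrix.cons_val_one]
        ring

theorem coordBox_subset_reachDI (p : Plane) (ht : 0 ≤ t) {a : ℝ} (ha : 0 ≤ a) :
    coordBox b p ![a, -(umax * a ^ 2 / (2 * v₀ ^ 2))]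
      ![arcAdvance v₀ (umax / v₀) t, umax * a ^ 2 / (2 * v₀ ^ 2)] ⊆
      reachDI vmax umax p (v₀ • b 0) t := by
  intro q hq
  obtain ⟨⟨hax, hx⟩, hy⟩ := Fin.forall_fin_two.1 hq
  simp only [Matrix.cons_val_zero, Matrix.cons_val_one] at hax hx hy
  have hqcoord : p + (b.repr (q - p) 0 • b 0 + b.repr (q - p) 1 • b 1) = q := by
    rw [← Fin.sum_univ_two fun i => b.repr (q - p) i • b i, b.sum_repr, add_sub_cancel]
  rw [← hqcoord]
  refine tauDI_le_of_mem_Icc_arcAdvance b humax hv₀ hle ht ⟨ha.trans hax, hx⟩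
    ((abs_le.2 hy).trans ?_)
  gcongr

theorem div_le_tauDI_of_mem_reachDI {a : ℝ} (ht : 0 ≤ t)
    (hq : q ∈ reachDI vmax umax p (v₀ • b 0) t) (ha : a ≤ b.repr (q - p) 0) :
    a / (v₀ + umax * t / 2) ≤ tauDI vmax umax p (v₀ • b 0) q := by
  have hτ := tauDI_nonneg vmax umax p (v₀ • b 0) q
  have hdrift := (abs_le.1 (abs_repr_zero_sub_tauDI_mul_le b humax hv₀ hle p q)).2
  have hsq : umax * tauDI vmax umax p (v₀ • b 0) q ^ 2 / 2 ≤
      umax * (tauDI vmax umax p (v₀ • b 0) q * t) / 2 := by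
    rw [sq]
    gcongr
    exact hq
  rw [div_le_iff₀ (by positivity)]
  linarith

theorem le_integral_tauDI_reachDI (p : Plane) (ht : 0 ≤ t) {a : ℝ} (ha : 0 ≤ a)
    (hat : a ≤ arcAdvance v₀ (umax / v₀) t) :
    a / (v₀ + umax * t / 2) *
        ((arcAdvance v₀ (umax / v₀) t - a) * (umax * a ^ 2 / v₀ ^ 2)) ≤
      ∫ q in reachDI vmax umax p (v₀ • b 0) t, tauDI vmax umax p (v₀ • b 0) q := by
  set l : Fin 2 → ℝ := ![a, -(umax * a ^ 2 / (2 * v₀ ^ 2))] with hl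
  set u : Fin 2 → ℝ := ![arcAdvance v₀ (umax / v₀) t, umax * a ^ 2 / (2 * v₀ ^ 2)] with hu
  have hlu : l ≤ u := Pi.le_def.2 <| Fin.forall_fin_two.2
    ⟨hat, neg_le_self (by positivity : 0 ≤ umax * a ^ 2 / (2 * v₀ ^ 2))⟩
  have hsub : coordBox b p l u ⊆ reachDI vmax umax p (v₀ • b 0) t :=
    coordBox_subset_reachDI b humax hv₀ hle p ht ha
  have hint := integrableOn_tauDI_reachDI b humax hv₀ hle p t
  calc _ = a / (v₀ + umax * t / 2) * volume.real (coordBox b p l u) := by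
        rw [volume_real_coordBox b p hlu, Fin.prod_univ_two]
        simp only [hl, hu, Matrix.cons_val_zero, Matrix.cons_val_one]
        ring
    _ ≤ ∫ q in coordBox b p l u, tauDI vmax umax p (v₀ • b 0) q :=
        setIntegral_ge_of_const_le_real (measurableSet_coordBox b p l u)
          (volume_coordBox_ne_top b p l u) (fun q hq =>
            div_le_tauDI_of_mem_reachDI b humax hv₀ hle ht (hsub hq) (hq 0).1) (hint.mono_set hsub)
    _ ≤ ∫ q in reachDI vmax umax p (v₀ • b 0) t, tauDI vmax umax p (v₀ • b 0) q :=
        setIntegral_mono_set hint (Eventually.of_forall fun q => tauDI_nonneg _ _ _ _ q)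
          hsub.eventuallyLE

theorem isCoboundedUnder_ge_integral_tauDI_reachDI (p : Plane) :
    IsCoboundedUnder (· ≥ ·) (𝓝[>] 0) fun t =>
      (∫ q in reachDI vmax umax p (v₀ • b 0) t, tauDI vmax umax p (v₀ • b 0) q) / t ^ 4 := by
  refine IsBoundedUnder.isCoboundedUnder_ge
    (isBoundedUnder_of_eventually_le (a := (v₀ + umax) * umax) ?_)
  filter_upwards [Ioc_mem_nhdsGT one_pos] with t ht
  have ht0 : 0 < t := ht.1
  rw [div_le_iff₀ (by positivity)]
  calc _ ≤ t * ((v₀ * t + umax * t ^ 2) * (umax * t ^ 2)) :=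
        integral_tauDI_reachDI_le b humax hv₀ hle p ht0.le
    _ = (v₀ + umax * t) * umax * t ^ 4 := by ring
    _ ≤ (v₀ + umax * 1) * umax * t ^ 4 := by gcongr; exact ht.2
    _ = (v₀ + umax) * umax * t ^ 4 := by rw [mul_one]

end SmallTime

theorem tendsto_arcAdvance_div {ω : ℝ} (hω : ω ≠ 0) (v₀ : ℝ) :
    Tendsto (fun t => arcAdvance v₀ ω t / t) (𝓝[>] 0) (𝓝 v₀) := by
  simpa [arcAdvance, div_eq_inv_mul] using
    (hasDerivAt_arcAdvance hω v₀ 0).tendsto_slope_zero_right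

/- `3 / 4` maximises `c ^ 3 * (1 - c)`, the dependence of the bound of `le_integral_tauDI_reachDI`
on the ratio `c` of `a` to the advance. -/
theorem eventually_le_integral_tauDI_reachDI_div (b : OrthonormalBasis (Fin 2) ℝ Plane)
    (humax : 0 < umax) (hv₀ : 0 < v₀) (hle : v₀ ≤ vmax) (p : Plane) {m : ℝ}
    (hm : m < 27 / 256 * (v₀ * umax)) :
    ∀ᶠ t in 𝓝[>] 0, m ≤
      (∫ q in reachDI vmax umax p (v₀ • b 0) t, tauDI vmax umax p (v₀ • b 0) q) / t ^ 4 := by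
  have hadvance := tendsto_arcAdvance_div (div_pos humax hv₀).ne' v₀
  have hspeed : Tendsto (fun t => v₀ + umax * t / 2) (𝓝[>] 0) (𝓝 v₀) :=
    tendsto_nhdsWithin_of_tendsto_nhds <| Continuous.tendsto' (by fun_prop) _ _ (by simp)
  have hlimit : Tendsto (fun t => 27 / 256 * umax * (arcAdvance v₀ (umax / v₀) t / t) ^ 4 /
      (v₀ ^ 2 * (v₀ + umax * t / 2))) (𝓝[>] 0) (𝓝 (27 / 256 * (v₀ * umax))) := by
    convert! ((hadvance.pow 4).const_mul (27 / 256 * umax)).div (hspeed.const_mul (v₀ ^ 2))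
      (by positivity) using 2
    field_simp
  filter_upwards [hlimit.eventually_const_lt hm, hadvance.eventually_const_lt hv₀,
    self_mem_nhdsWithin] with t hmt hξt (ht : 0 < t)
  set ξ := arcAdvance v₀ (umax / v₀) t
  have hξ : 0 < ξ := (div_pos_iff_of_pos_right ht).1 hξt
  rw [le_div_iff₀ (by positivity)]
  calc m * t ^ 4 ≤ 27 / 256 * umax * (ξ / t) ^ 4 / (v₀ ^ 2 * (v₀ + umax * t / 2)) * t ^ 4 := by
        gcongr
    _ = 3 / 4 * ξ / (v₀ + umax * t / 2) *
          ((ξ - 3 / 4 * ξ) * (umax * (3 / 4 * ξ) ^ 2 / v₀ ^ 2)) := by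
        field_simp
        ring
    _ ≤ _ := le_integral_tauDI_reachDI b humax hv₀ hle p ht.le (by positivity) (by linarith)

end Trajectories

/-- small-time lower bound on the integral of the travel time over the
reachable set of a DI robot with nonzero initial speed:
`liminf_{t→0⁺} (∫_{R_t(g)} τ_DI(g,q) dq) / t⁴ ≥ v₀ u_max / 12`. -/
theorem di_travel_time_integral_lower_bound
    (vmax umax v₀ : ℝ) (hvmax : 0 < vmax) (humax : 0 < umax)
    (p v : Plane) (hv₀ : ‖v‖ = v₀) (h0 : 0 < v₀) (hle : v₀ ≤ vmax) :
    v₀ * umax / 12 ≤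
      Filter.liminf
        (fun t : ℝ =>
          (∫ q in reachDI vmax umax p v t, tauDI vmax umax p v q) / t ^ 4)
        (𝓝[>] 0) := by
  obtain ⟨b, rfl⟩ : ∃ b : OrthonormalBasis (Fin 2) ℝ Plane, v₀ • b 0 = v := by
    rw [← hv₀]
    exact exists_orthonormalBasis_norm_smul_eq (by simp) 0 (norm_pos_iff.1 (hv₀.symm ▸ h0))
  have hconst : v₀ * umax / 12 < 27 / 256 * (v₀ * umax) := by
    linarith [mul_pos h0 humax]
  exact le_liminf_of_le (isCoboundedUnder_ge_integral_tauDI_reachDI b humax h0 hle p)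
    (eventually_le_integral_tauDI_reachDI_div b humax h0 hle p hconst)
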